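/- Let N be a normal subgroup of GA₃ containing all diagonal automorphisms. Then the Nagata automorphism F, i.e. any F ∈ GA₃ with F*(X) = X − 2(Y²+XZ)Y − (Y²+XZ)²Z, F*(Y) = Y + (Y²+XZ)Z, F*(Z) = Z, belongs to N. -/

import Mathlib

/-!
The Nagata automorphism is the value at `t = 1` of a one-parameter group `t ↦ nagataAut t`. If the
quadric `Y² + XZ` is an eigenvector of a diagonal automorphism `d = diag(u₀, u₁, u₂)`, that is, if
`u₁² = u₀u₂`, then conjugation by `d` acts on this group as `t ↦ u₁u₂t`. Hence the commutator of `d`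
and `nagataAut s` is `nagataAut ((u₁u₂ - 1)s)`. It lies in every normal subgroup containing `d`, and
it runs through the whole one-parameter group when `u₁u₂ - 1` is invertible. In characteristic
different from 2, the involution `d = diag(1, -1, 1)` already suffices.
-/

open MvPolynomial

/-- The group `GA₃` of polynomial automorphisms of `k³`, identified with the group of
`k`-algebra automorphisms of `k[X,Y,Z] = MvPolynomial (Fin 3) k` (with `X = X 0`,
`Y = X 1`, `Z = X 2`). -/
abbrev PolyAut3 (k : Type*) [Field k] :=
  MvPolynomial (Fin 3) k ≃ₐ[k] MvPolynomial (Fin 3) k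

/-- `G ∈ GA₃` is diagonal if `G*(X) = c₁X`, `G*(Y) = c₂Y`, `G*(Z) = c₃Z` with all
`cᵢ ≠ 0`. -/
def IsDiagonal3 {k : Type*} [Field k] (G : PolyAut3 k) : Prop :=
  ∀ i : Fin 3, ∃ c : k, c ≠ 0 ∧ G (X i) = C c * X i

section DiagonalAut

variable {σ R : Type*} [CommRing R]

/-- The diagonal automorphism `X i ↦ u i * X i` of a polynomial ring, the coefficients being units
so that it is invertible. -/
noncomputable def diagonalAut (u : σ → Rˣ) : MvPolynomial σ R ≃ₐ[R] MvPolynomial σ R :=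
  AlgEquiv.ofAlgHom (aeval fun i => C (u i : R) * X i) (aeval fun i => C (↑(u i)⁻¹ : R) * X i)
    (by ext i : 1; simp [algebraMap_eq, ← mul_assoc, ← C_mul])
    (by ext i : 1; simp [algebraMap_eq, ← mul_assoc, ← C_mul])

@[simp]
lemma diagonalAut_X (u : σ → Rˣ) (i : σ) : diagonalAut u (X i) = C (u i : R) * X i := by
  simp [diagonalAut]

@[simp]
lemma diagonalAut_C (u : σ → Rˣ) (a : R) : diagonalAut u (C a) = C a :=
  (diagonalAut u).commutes a

lemma isDiagonal3_diagonalAut {k : Type*} [Field k] (u : Fin 3 → kˣ) :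
    IsDiagonal3 (diagonalAut u) :=
  fun i => ⟨u i, (u i).ne_zero, diagonalAut_X u i⟩

end DiagonalAut

section NagataAut

variable {R : Type*} [CommRing R]

variable (R) in
/-- The quadric `Y² + XZ`, an invariant of the Nagata automorphism. -/
noncomputable def nagataQuadric : MvPolynomial (Fin 3) R :=
  X 1 ^ 2 + X 0 * X 2

/-- The endomorphism `X ↦ X - 2tqY - t²q²Z`, `Y ↦ Y + tqZ`, `Z ↦ Z` of `R[X,Y,Z]`, where
`q = Y² + XZ`. It underlies the automorphism `nagataAut t`. -/
noncomputable def nagataHom (t : R) : MvPolynomial (Fin 3) R →ₐ[R] MvPolynomial (Fin 3) R :=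
  aeval ![X 0 - 2 * (C t * nagataQuadric R) * X 1 - (C t * nagataQuadric R) ^ 2 * X 2,
    X 1 + C t * nagataQuadric R * X 2, X 2]

@[simp]
lemma nagataHom_X_zero (t : R) : nagataHom t (X 0) =
    X 0 - 2 * (C t * nagataQuadric R) * X 1 - (C t * nagataQuadric R) ^ 2 * X 2 := by
  simp [nagataHom]

@[simp]
lemma nagataHom_X_one (t : R) : nagataHom t (X 1) = X 1 + C t * nagataQuadric R * X 2 := by
  simp [nagataHom]

@[simp]
lemma nagataHom_X_two (t : R) : nagataHom t (X 2) = X 2 := by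
  simp [nagataHom]

@[simp]
lemma nagataHom_nagataQuadric (t : R) : nagataHom t (nagataQuadric R) = nagataQuadric R := by
  conv_lhs => rw [nagataQuadric]
  simp only [map_add, map_mul, map_pow, nagataHom_X_zero, nagataHom_X_one, nagataHom_X_two]
  generalize C t * nagataQuadric R = s
  rw [nagataQuadric]
  ring

lemma nagataHom_zero : nagataHom (0 : R) = AlgHom.id R _ := by
  ext i : 1
  fin_cases i <;> simp

lemma nagataHom_comp (s t : R) : (nagataHom s).comp (nagataHom t) = nagataHom (s + t) := by
  ext i : 1
  fin_cases i
  · simp only [Fin.zero_eta, AlgHom.coe_comp, Function.comp_apply, nagataHom_X_zero,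
      nagataHom_X_one, nagataHom_X_two, nagataHom_nagataQuadric, map_sub, map_mul, map_pow,
      map_ofNat, map_add, algHom_C, algebraMap_eq]
    ring
  · simp only [Fin.mk_one, AlgHom.coe_comp, Function.comp_apply, nagataHom_X_one,
      nagataHom_X_two, nagataHom_nagataQuadric, map_mul, map_add, algHom_C, algebraMap_eq]
    ring
  · simp

/-- The one-parameter group of automorphisms of `R[X,Y,Z]` through the Nagata automorphism, which is
`nagataAut 1`. -/
noncomputable def nagataAut (t : R) : MvPolynomial (Fin 3) R ≃ₐ[R] MvPolynomial (Fin 3) R :=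
  AlgEquiv.ofAlgHom (nagataHom t) (nagataHom (-t))
    (by rw [nagataHom_comp, add_neg_cancel, nagataHom_zero])
    (by rw [nagataHom_comp, neg_add_cancel, nagataHom_zero])

@[simp]
lemma nagataAut_apply (t : R) (p : MvPolynomial (Fin 3) R) : nagataAut t p = nagataHom t p :=
  rfl

lemma nagataAut_add (s t : R) : nagataAut (s + t) = nagataAut s * nagataAut t := by
  ext1 p
  exact (DFunLike.congr_fun (nagataHom_comp s t) p).symm

lemma eq_nagataAut_one {F : MvPolynomial (Fin 3) R ≃ₐ[R] MvPolynomial (Fin 3) R}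
    (hFX : F (X 0) = X 0 - 2 * (X 1 ^ 2 + X 0 * X 2) * X 1 - (X 1 ^ 2 + X 0 * X 2) ^ 2 * X 2)
    (hFY : F (X 1) = X 1 + (X 1 ^ 2 + X 0 * X 2) * X 2)
    (hFZ : F (X 2) = X 2) : F = nagataAut 1 := by
  apply AlgEquiv.coe_toAlgHom_injective
  ext i : 1
  fin_cases i <;> simp [hFX, hFY, hFZ, nagataQuadric]

lemma diagonalAut_nagataQuadric {u : Fin 3 → Rˣ} (hu : (u 1 : R) ^ 2 = u 0 * u 2) :
    diagonalAut u (nagataQuadric R) = C (u 1 : R) ^ 2 * nagataQuadric R := by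
  have hC : C (σ := Fin 3) (u 1 : R) ^ 2 = C (u 0 : R) * C (u 2 : R) := by
    rw [← C_pow, hu, C_mul]
  simp only [nagataQuadric, map_add, map_mul, map_pow, diagonalAut_X]
  linear_combination -X 0 * X 2 * hC

lemma diagonalAut_mul_nagataAut {u : Fin 3 → Rˣ} (hu : (u 1 : R) ^ 2 = u 0 * u 2) (t : R) :
    diagonalAut u * nagataAut t = nagataAut (u 1 * u 2 * t) * diagonalAut u := by
  have hC : C (σ := Fin 3) (u 1 : R) ^ 2 = C (u 0 : R) * C (u 2 : R) := by
    rw [← C_pow, hu, C_mul]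
  apply AlgEquiv.coe_toAlgHom_injective
  ext i : 1
  fin_cases i
  · simp only [Fin.zero_eta, AlgEquiv.coe_toAlgHom, AlgEquiv.mul_apply, nagataAut_apply,
      nagataHom_X_zero, map_sub, diagonalAut_X, map_mul, map_ofNat, diagonalAut_C,
      diagonalAut_nagataQuadric hu, map_pow, algHom_C, algebraMap_eq]
    linear_combination
      -(2 * C t * nagataQuadric R * C (u 1 : R) * X 1
        + C t ^ 2 * nagataQuadric R ^ 2 * C (u 1 : R) ^ 2 * C (u 2 : R) * X 2) * hC
  · simp only [Fin.mk_one, AlgEquiv.coe_toAlgHom, AlgEquiv.mul_apply, nagataAut_apply,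
      nagataHom_X_one, map_add, diagonalAut_X, map_mul, diagonalAut_C,
      diagonalAut_nagataQuadric hu, algHom_C, algebraMap_eq]
    ring
  · simp

theorem nagata_mem_normal_subgroup_general
    {N : Subgroup (MvPolynomial (Fin 3) R ≃ₐ[R] MvPolynomial (Fin 3) R)} (hN : N.Normal)
    {u : Fin 3 → Rˣ} (hu : (u 1 : R) ^ 2 = u 0 * u 2) (hunit : IsUnit (u 1 * u 2 - 1 : R))
    (hmem : diagonalAut u ∈ N) (t : R) : nagataAut t ∈ N := by
  obtain ⟨s, rfl⟩ : ∃ s, (u 1 * u 2 - 1 : R) * s = t := hunit.dvd.imp fun _ => Eq.symm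
  have hcomm : nagataAut ((u 1 * u 2 - 1 : R) * s) =
      diagonalAut u * (nagataAut s * (diagonalAut u)⁻¹ * (nagataAut s)⁻¹) := by
    rw [← mul_assoc, ← mul_assoc, diagonalAut_mul_nagataAut hu, mul_inv_cancel_right,
      eq_mul_inv_iff_mul_eq, ← nagataAut_add]
    congr 1
    ring
  rw [hcomm]
  exact N.mul_mem hmem (hN.conj_mem _ (N.inv_mem hmem) _)

end NagataAut

/-- Let `N` be a normal subgroup of `GA₃` containing all diagonal automorphisms.  Then
the Nagata automorphism `F`, with `F*(X) = X − 2(Y²+XZ)Y − (Y²+XZ)²Z`,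
`F*(Y) = Y + (Y²+XZ)Z`, `F*(Z) = Z`, belongs to `N`. -/
theorem nagata_mem_normal_subgroup (k : Type*) [Field k] [CharZero k]
    (N : Subgroup (PolyAut3 k)) (hN : N.Normal)
    (hdiag : ∀ D : PolyAut3 k, IsDiagonal3 D → D ∈ N)
    (F : PolyAut3 k)
    (hFX : F (X 0) = X 0 - 2 * ((X 1) ^ 2 + X 0 * X 2) * X 1
        - ((X 1) ^ 2 + X 0 * X 2) ^ 2 * X 2)
    (hFY : F (X 1) = X 1 + ((X 1) ^ 2 + X 0 * X 2) * X 2)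
    (hFZ : F (X 2) = X 2) :
    F ∈ N := by
  rw [eq_nagataAut_one hFX hFY hFZ]
  exact nagata_mem_normal_subgroup_general hN (u := ![1, -1, 1]) (by simp)
    (by simp [show (-1 - 1 : k) = -2 by norm_num]) (hdiag _ (isDiagonal3_diagonalAut _)) 1
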